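/- Let A = [[a,c],[b,d]] and A′ = [[a′,c′],[b′,d′]] be invertible 2×2 quaternionic matrices. The regular fractional transformations ℱ_A and ℱ_{A′} agree at every q ∈ ℍ at which both are defined if and only if there exists e ∈ ℍ, e ≠ 0, such that a′ = ea, b′ = eb, c′ = ec, d′ = ed (i.e. A′ = eA). -/

import Mathlib

open Quaternion Matrix

/-- The real quadratic denominator `|c|²q² + 2Re(c·conj d)q + |d|²` of the regular
fractional transformation associated to `[[a,c],[b,d]]`. -/
noncomputable def regDenom (c d q : ℍ[ℝ]) : ℍ[ℝ] :=
  ((‖c‖ ^ 2 : ℝ) : ℍ[ℝ]) * q ^ 2 + ((2 * (c * star d).re : ℝ) : ℍ[ℝ]) * q + ((‖d‖ ^ 2 : ℝ) : ℍ[ℝ])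

/-- The regular fractional transformation `ℱ_A(q) = (qc+d)^{-*} * (qa+b)` associated to
`A = [[a,c],[b,d]]`, in explicit form. -/
noncomputable def regFT (a c b d q : ℍ[ℝ]) : ℍ[ℝ] :=
  (regDenom c d q)⁻¹ *
    (q ^ 2 * (star c * a) + q * (star d * a + star c * b) + star d * b)

/-!
At a real point `t` the regular product is the pointwise one, so `ℱ_A(t) = (tc + d)⁻¹(ta + b)`,
and this value determines the row vector `(t, 1)A` up to a left factor. Agreement of `ℱ_A` and
`ℱ_A'` at infinitely many reals therefore says that `(t, 1)` is a left eigenvector of `B = A'A⁻¹`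
for infinitely many `t`. Eliminating the eigenvalue leaves a quadratic equation
`t²B₀₁ + t(B₁₁ - B₀₀) - B₁₀ = 0` with central unknown `t`, whose coefficients must vanish, and so
`B = e • 1`.

Conversely, replacing `A` by `eA` multiplies the numerator and the denominator of `ℱ_A` by `|e|²`.
-/

theorem coeffs_eq_zero_of_infinite_quadratic_roots {R M : Type*} [CommRing R] [IsDomain R]
    [AddCommGroup M] [Module R M] [Module.IsTorsionFree R M] {n k p : M} {S : Set R}
    (hS : S.Infinite) (h : ∀ t ∈ S, t ^ 2 • n + t • k + p = 0) : n = 0 ∧ k = 0 ∧ p = 0 := by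
  obtain ⟨r, hr⟩ := hS.nonempty
  have divided_difference : ∀ t ∈ S, t ≠ r → (t + r) • n + k = 0 := by
    intro t ht htr
    refine (smul_eq_zero_iff_right (sub_ne_zero.mpr htr)).mp ?_
    linear_combination (norm := module) h t ht - h r hr
  obtain ⟨s, ⟨hs, hsr⟩, t, ⟨ht, htr⟩, hst⟩ := (hS.sdiff (Set.finite_singleton r)).nontrivial
  have hn : n = 0 := by
    refine (smul_eq_zero_iff_right (sub_ne_zero.mpr hst)).mp ?_
    linear_combination (norm := module) divided_difference s hs hsr - divided_difference t ht htr
  have hk : k = 0 := by simpa only [hn, smul_zero, zero_add] using divided_difference s hs hsr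
  have hp : p = 0 := by simpa only [hn, hk, smul_zero, zero_add] using h r hr
  exact ⟨hn, hk, hp⟩

theorem subsingleton_setOf_smul_add_eq_zero {R M : Type*} [Ring R] [IsDomain R]
    [AddCommGroup M] [Module R M] [Module.IsTorsionFree R M] {c d : M} (h : c ≠ 0 ∨ d ≠ 0) :
    {t : R | t • c + d = 0}.Subsingleton := by
  intro s (hs : s • c + d = 0) t (ht : t • c + d = 0)
  have hc : c ≠ 0 := by
    rintro rfl
    exact h.elim (· rfl) (· (by simpa only [smul_zero, zero_add] using hs))
  rw [← eq_neg_iff_add_eq_zero] at hs ht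
  exact smul_left_injective R hc (hs.trans ht.symm)

section Matrix

theorem col_ne_zero_of_isUnit {n α : Type*} [Fintype n] [DecidableEq n] [Semiring α]
    [Nontrivial α] {A : Matrix n n α} (hA : IsUnit A) (j : n) : A.col j ≠ 0 := by
  rw [← mulVec_single_one, ← A.mulVec_zero]
  exact (mulVec_injective_of_isUnit hA).ne (Pi.single_ne_zero_iff.mpr one_ne_zero)

theorem ne_zero_or_ne_zero_of_isUnit {α : Type*} [Semiring α] [Nontrivial α] {a b c d : α}
    (hA : IsUnit !![a, c; b, d]) : c ≠ 0 ∨ d ≠ 0 := by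
  by_contra! hcd
  refine col_ne_zero_of_isUnit hA 1 (funext fun i ↦ ?_)
  fin_cases i
  exacts [hcd.1, hcd.2]

variable {R D : Type*} [CommRing R] [IsDomain R] [Ring D] [Algebra R D] [Module.IsTorsionFree R D]

theorem exists_eq_smul_one_of_infinite_eigenvectors {B : Matrix (Fin 2) (Fin 2) D} {S : Set R}
    (hS : S.Infinite) (h : ∀ t ∈ S, ∃ μ : D, t • B 0 + B 1 = μ • ![algebraMap R D t, 1]) :
    ∃ e : D, B = e • 1 := by
  have quadratic : ∀ t ∈ S, t ^ 2 • B 0 1 + t • (B 1 1 - B 0 0) + -B 1 0 = 0 := by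
    intro t ht
    obtain ⟨μ, hμ⟩ := h t ht
    have h₀ : t • B 0 0 + B 1 0 = t • μ := by
      simpa [Algebra.smul_def, Algebra.commutes] using congrFun hμ 0
    have h₁ : t • B 0 1 + B 1 1 = μ := by simpa using congrFun hμ 1
    rw [← h₁] at h₀
    linear_combination (norm := module) -h₀
  obtain ⟨h₀₁, hdiag, h₁₀⟩ := coeffs_eq_zero_of_infinite_quadratic_roots hS quadratic
  refine ⟨B 0 0, ?_⟩
  ext i j
  fin_cases i <;> fin_cases j <;> simp [h₀₁, sub_eq_zero.mp hdiag, neg_eq_zero.mp h₁₀]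

theorem exists_eq_smul_of_infinite_proportional {A A' : Matrix (Fin 2) (Fin 2) D}
    (hA : IsUnit A) {S : Set R} (hS : S.Infinite)
    (h : ∀ t ∈ S, ∃ μ : D, t • A' 0 + A' 1 = μ • (t • A 0 + A 1)) : ∃ e : D, A' = e • A := by
  obtain ⟨U, hAU, hUA⟩ := isUnit_iff_exists.mp hA
  obtain ⟨e, he⟩ : ∃ e : D, A' * U = e • 1 := by
    refine exists_eq_smul_one_of_infinite_eigenvectors hS fun t ht ↦ ?_
    obtain ⟨μ, hμ⟩ := h t ht
    refine ⟨μ, ?_⟩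
    calc t • (A' * U) 0 + (A' * U) 1
        = (t • A' 0 + A' 1) ᵥ* U := by
          simp only [add_vecMul, smul_vecMul, mul_apply_eq_vecMul]
      _ = μ • (t • (A * U) 0 + (A * U) 1) := by
          simp only [hμ, add_vecMul, smul_vecMul, mul_apply_eq_vecMul]
      _ = μ • ![algebraMap R D t, 1] := by
          rw [hAU]
          congr 1
          ext j
          fin_cases j <;> simp [Algebra.smul_def]
  exact ⟨e, by rw [← mul_one A', ← hUA, ← mul_assoc, he, smul_mul_assoc, one_mul]⟩

end Matrix

theorem regDenom_eq_normSq (c d q : ℍ[ℝ]) :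
    regDenom c d q = normSq c • q ^ 2 + (2 * (c * star d).re) • q + (normSq d : ℝ) := by
  simp only [regDenom, coe_mul_eq_smul, normSq_eq_norm_mul_self, pow_two]

theorem regDenom_coe (c d : ℍ[ℝ]) (t : ℝ) :
    regDenom c d t = star (t • c + d) * (t • c + d) := by
  rw [star_mul_self, normSq_add, normSq_smul, smul_mul_assoc, re_smul, smul_eq_mul,
    regDenom_eq_normSq, ← coe_pow, smul_coe, smul_coe, ← coe_add, ← coe_add]
  ring_nf

theorem regDenom_coe_ne_zero_iff {c d : ℍ[ℝ]} {t : ℝ} :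
    regDenom c d t ≠ 0 ↔ t • c + d ≠ 0 := by
  rw [regDenom_coe, mul_ne_zero_iff, star_ne_zero, and_self]

theorem regFT_coe (a b : ℍ[ℝ]) {c d : ℍ[ℝ]} {t : ℝ} (h : t • c + d ≠ 0) :
    regFT a c b d t = (t • c + d)⁻¹ * (t • a + b) := by
  have numerator : (t : ℍ[ℝ]) ^ 2 * (star c * a) + t * (star d * a + star c * b) + star d * b
      = star (t • c + d) * (t • a + b) := by
    rw [← coe_pow, coe_mul_eq_smul, coe_mul_eq_smul, star_add, Quaternion.star_smul]
    simp only [add_mul, mul_add, smul_mul_assoc, mul_smul_comm]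
    module
  rw [regFT, numerator, regDenom_coe, _root_.mul_inv_rev, mul_assoc,
    inv_mul_cancel_left₀ (star_ne_zero.mpr h)]

theorem star_mul_left_mul_mul_left {R : Type*} [CommRing R] (e u v : ℍ[R]) :
    star (e * u) * (e * v) = normSq e • (star u * v) := by
  rw [star_mul, mul_assoc, ← mul_assoc (star e), star_mul_self, coe_mul_eq_smul, mul_smul_comm]

theorem re_mul_left_mul_star_mul_left {R : Type*} [CommRing R] (e u v : ℍ[R]) :
    (e * u * star (e * v)).re = normSq e * (u * star v).re := by
  simp only [normSq_def', re_mul, imI_mul, imJ_mul, imK_mul, re_star, imI_star, imJ_star, imK_star]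
  ring

theorem regDenom_mul_left (e c d q : ℍ[ℝ]) :
    regDenom (e * c) (e * d) q = normSq e • regDenom c d q := by
  simp only [regDenom_eq_normSq, map_mul, re_mul_left_mul_star_mul_left, smul_add, smul_smul,
    smul_coe, mul_left_comm (2 : ℝ)]

theorem regFT_mul_left {e : ℍ[ℝ]} (he : e ≠ 0) (a c b d q : ℍ[ℝ]) :
    regFT (e * a) (e * c) (e * b) (e * d) q = regFT a c b d q := by
  have hne : normSq e ≠ 0 := normSq_ne_zero.mpr he
  simp only [regFT, regDenom_mul_left, star_mul_left_mul_mul_left, mul_smul_comm, ← smul_add]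
  rw [smul_inv₀, smul_mul_assoc, smul_smul, mul_inv_cancel₀ hne, one_smul]

theorem exists_eq_smul_of_infinite_regFT_coe_eq {a c b d a' c' b' d' : ℍ[ℝ]}
    (hA : IsUnit !![a, c; b, d]) (hcd' : c' ≠ 0 ∨ d' ≠ 0) {S : Set ℝ} (hS : S.Infinite)
    (h : ∀ t ∈ S, regDenom c d t ≠ 0 → regDenom c' d' t ≠ 0 →
      regFT a c b d t = regFT a' c' b' d' t) :
    ∃ e : ℍ[ℝ], !![a', c'; b', d'] = e • !![a, c; b, d] := by
  have hcd : c ≠ 0 ∨ d ≠ 0 := ne_zero_or_ne_zero_of_isUnit hA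
  have hS' := (hS.sdiff (subsingleton_setOf_smul_add_eq_zero hcd).finite).sdiff
    (subsingleton_setOf_smul_add_eq_zero hcd').finite
  refine exists_eq_smul_of_infinite_proportional hA hS' ?_
  rintro t ⟨⟨htS, (ht : t • c + d ≠ 0)⟩, (ht' : t • c' + d' ≠ 0)⟩
  have heq := h t htS (regDenom_coe_ne_zero_iff.mpr ht) (regDenom_coe_ne_zero_iff.mpr ht')
  rw [regFT_coe a b ht, regFT_coe a' b' ht'] at heq
  have hnum : t • a' + b' = (t • c' + d') * (t • c + d)⁻¹ * (t • a + b) := by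
    rw [mul_assoc, heq, mul_inv_cancel_left₀ ht']
  have hden : t • c' + d' = (t • c' + d') * (t • c + d)⁻¹ * (t • c + d) := by
    rw [inv_mul_cancel_right₀ ht]
  refine ⟨(t • c' + d') * (t • c + d)⁻¹, funext fun j ↦ ?_⟩
  fin_cases j
  · simpa using hnum
  · simpa using hden

theorem regular_fractional_eq_iff_general {a c b d a' c' b' d' : ℍ[ℝ]}
    (hA : IsUnit !![a, c; b, d]) (hcd' : c' ≠ 0 ∨ d' ≠ 0) {S : Set ℍ[ℝ]}
    (hS : {t : ℝ | (t : ℍ[ℝ]) ∈ S}.Infinite) :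
    (∀ q ∈ S, regDenom c d q ≠ 0 → regDenom c' d' q ≠ 0 →
        regFT a c b d q = regFT a' c' b' d' q) ↔
      ∃ e : ℍ[ℝ], e ≠ 0 ∧ a' = e * a ∧ b' = e * b ∧ c' = e * c ∧ d' = e * d := by
  constructor
  · intro h
    obtain ⟨e, he⟩ := exists_eq_smul_of_infinite_regFT_coe_eq hA hcd' hS fun t ↦ h t
    obtain ⟨⟨ha, hc⟩, hb, hd⟩ : (a' = e * a ∧ c' = e * c) ∧ b' = e * b ∧ d' = e * d := by
      simpa using he
    refine ⟨e, ?_, ha, hb, hc, hd⟩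
    rintro rfl
    exact hcd'.elim (· (by rw [hc, zero_mul])) (· (by rw [hd, zero_mul]))
  · rintro ⟨e, he, rfl, rfl, rfl, rfl⟩ q - - -
    exact (regFT_mul_left he a c b d q).symm

/-- Two regular fractional transformations `ℱ_A` and `ℱ_A'` agree wherever both are defined
if and only if `A' = eA` for some nonzero quaternion `e`. -/
theorem regular_fractional_eq_iff (a c b d a' c' b' d' : ℍ[ℝ])
    (hA : IsUnit !![a, c; b, d]) (hA' : IsUnit !![a', c'; b', d']) :
    (∀ q : ℍ[ℝ], regDenom c d q ≠ 0 → regDenom c' d' q ≠ 0 →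
        regFT a c b d q = regFT a' c' b' d' q) ↔
      ∃ e : ℍ[ℝ], e ≠ 0 ∧ a' = e * a ∧ b' = e * b ∧ c' = e * c ∧ d' = e * d := by
  simpa only [Set.mem_univ, true_imp_iff] using
    regular_fractional_eq_iff_general hA (ne_zero_or_ne_zero_of_isUnit hA') (S := Set.univ)
      Set.infinite_univ
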